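/- If p − q ≢ 1 (mod 4), then Cl_{p,q} is a simple ℝ-algebra of dimension 2^{p+q} isomorphic to the full matrix algebra Mat(2^k, 𝕂) with k = q − r_{q−p}, where 𝕂 = ℝ if p − q ≡ 0 or 2 (mod 8), 𝕂 = ℂ if p − q ≡ 3 or 7 (mod 8), and 𝕂 = ℍ if p − q ≡ 4 or 6 (mod 8). -/

import Mathlib

noncomputable section

/-- The quadratic form of signature `(p,q)` on `ℝ^(p+q)`. -/
def Qpq (p q : ℕ) : QuadraticForm ℝ (Fin (p + q) → ℝ) :=
  QuadraticMap.weightedSumSquares ℝ (fun i : Fin (p + q) => if (i : ℕ) < p then (1 : ℝ) else -1)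

/-- The real Clifford algebra `Cl_{p,q}`. -/
abbrev Cl (p q : ℕ) : Type := CliffordAlgebra (Qpq p q)

/-- The generators `e i` of `Cl_{p,q}`. -/
def gen (p q : ℕ) (i : Fin (p + q)) : Cl p q :=
  CliffordAlgebra.ι (Qpq p q) (Pi.single i 1)

/-- The values of the Radon–Hurwitz numbers `r_0,…,r_7`. -/
def rhBase : ℕ → ℤ
  | 0 => 0
  | 1 => 1
  | 2 => 2
  | 3 => 2
  | _ => 3

/-- The Radon–Hurwitz number `r_i` (`r_0 = 0`, `r_1 = 1`, `r_2 = r_3 = 2`,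
`r_4 = r_5 = r_6 = r_7 = 3`), extended to all integers by `r_{i+8} = r_i + 4`. -/
def radonHurwitz (i : ℤ) : ℤ := 4 * ((i - i % 8) / 8) + rhBase (i % 8).toNat

/-!
Let `ω` be an even element of `Cl(Q₂)` that anticommutes with all vectors and whose square is a
unit `c`. Vectors `x` and `y` of the two summands anticommute in `Cl((c Q₁) ⊕ Q₂)`, so `x ω`
commutes with `y`, and `(x ω)² = c² Q₁(x)`: twisting by `ω` turns the graded tensor product into
the ungraded one, `Cl((c Q₁) ⊕ Q₂) ≃ Cl(Q₁) ⊗ Cl(Q₂)`. For the binary form `⟨a, b⟩` the product of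
the two basis vectors is such an `ω`, with `c = -ab`, and `Cl(⟨a, b⟩)` is the quaternion algebra
`(a, b)`, which is `M₂` if `a = 1`. Over `ℝ` this gives
`Cl_{p+1,q+1} ≃ Cl_{p,q} ⊗ M₂(ℝ)`, `Cl_{q+2,p} ≃ Cl_{p,q} ⊗ M₂(ℝ)`, `Cl_{q,p+2} ≃ Cl_{p,q} ⊗ ℍ`.
Starting from `Cl_{0,0} = ℝ` and `Cl_{0,1} = ℂ`, these recursions determine the coefficient
algebra of `Cl_{p,q}`, since `ℂ ⊗ ℍ` and `ℍ ⊗ ℍ` are matrix algebras over `ℂ` and `ℝ`. The size of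
the matrices is then forced by the dimension `2^(p+q)`.
-/

open CliffordAlgebra QuadraticMap Quaternion
open scoped TensorProduct

section TwistedProduct

variable {R M₁ M₂ : Type*} [CommRing R] [AddCommGroup M₁] [AddCommGroup M₂] [Module R M₁]
  [Module R M₂] {Q₁ : QuadraticForm R M₁} {Q₂ : QuadraticForm R M₂}

theorem commute_of_commute_ι {A : Type*} [Ring A] [Algebra R A]
    {f : CliffordAlgebra Q₁ →ₐ[R] A} {g : CliffordAlgebra Q₂ →ₐ[R] A}
    (h : ∀ x y, Commute (f (ι Q₁ x)) (g (ι Q₂ y))) (a : CliffordAlgebra Q₁)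
    (b : CliffordAlgebra Q₂) : Commute (f a) (g b) := by
  induction a using CliffordAlgebra.induction with
  | algebraMap r => rw [AlgHom.commutes]; exact Algebra.commute_algebraMap_left r _
  | add a₁ a₂ h₁ h₂ => rw [map_add]; exact h₁.add_left h₂
  | mul a₁ a₂ h₁ h₂ => rw [map_mul]; exact h₁.mul_left h₂
  | ι x =>
    induction b using CliffordAlgebra.induction with
    | algebraMap r => rw [AlgHom.commutes]; exact Algebra.commute_algebraMap_right r _
    | add b₁ b₂ h₁ h₂ => rw [map_add]; exact h₁.add_right h₂
    | mul b₁ b₂ h₁ h₂ => rw [map_mul]; exact h₁.mul_right h₂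
    | ι y => exact h x y

/-- `ω` is an even element of the Clifford algebra that anticommutes with every vector and has
scalar square `c`, such as the volume element of an orthogonal basis of even size. -/
structure IsEvenAnticentral (ω : CliffordAlgebra Q₂) (c : R) : Prop where
  mem_evenOdd_zero : ω ∈ evenOdd Q₂ 0
  mul_ι (v : M₂) : ω * ι Q₂ v = -(ι Q₂ v * ω)
  mul_self : ω * ω = algebraMap R _ c

namespace IsEvenAnticentral

variable (Q₁) {ω : CliffordAlgebra Q₂} {c : R}

/-- The algebra map `Cl((c Q₁) ⊕ Q₂) → Cl(Q₁) ⊗ Cl(Q₂)` given on vectors by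
`(x, y) ↦ x ⊗ ω + 1 ⊗ y`. -/
def toTensor (hω : IsEvenAnticentral ω c) :
    CliffordAlgebra ((c • Q₁).prod Q₂) →ₐ[R] CliffordAlgebra Q₁ ⊗[R] CliffordAlgebra Q₂ :=
  lift _ ⟨((TensorProduct.mk R _ _).flip ω ∘ₗ ι Q₁).coprod (TensorProduct.mk R _ _ 1 ∘ₗ ι Q₂), by
    rintro ⟨x, y⟩
    simp [add_mul, mul_add, hω.mul_self, hω.mul_ι, TensorProduct.tmul_neg,
      Algebra.algebraMap_eq_smul_one, Algebra.TensorProduct.one_def, TensorProduct.smul_tmul,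
      smul_smul, add_smul]⟩

@[simp]
theorem toTensor_ι (hω : IsEvenAnticentral ω c) (x : M₁) (y : M₂) :
    hω.toTensor Q₁ (ι _ (x, y)) = ι Q₁ x ⊗ₜ ω + 1 ⊗ₜ ι Q₂ y :=
  lift_ι_apply _ _ _

@[simp]
theorem toTensor_map_inr (hω : IsEvenAnticentral ω c) (b : CliffordAlgebra Q₂) :
    hω.toTensor Q₁ (map (QuadraticMap.Isometry.inr (c • Q₁) Q₂) b) = 1 ⊗ₜ b := by
  have : (hω.toTensor Q₁).comp (map (QuadraticMap.Isometry.inr (c • Q₁) Q₂)) =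
      Algebra.TensorProduct.includeRight := by ext; simp
  exact DFunLike.congr_fun this b

theorem map_inr_mul_self (hω : IsEvenAnticentral ω c) :
    map (QuadraticMap.Isometry.inr Q₁ Q₂) ω * map (QuadraticMap.Isometry.inr Q₁ Q₂) ω =
      algebraMap R _ c := by
  rw [← map_mul, hω.mul_self, AlgHom.commutes]

theorem commute_ι_inl_map_inr (hω : IsEvenAnticentral ω c) (x : M₁) :
    Commute (ι (Q₁.prod Q₂) (x, 0)) (map (QuadraticMap.Isometry.inr Q₁ Q₂) ω) := by
  have h := commute_map_mul_map_of_isOrtho_of_mem_evenOdd_zero_right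
    (QuadraticMap.Isometry.inl Q₁ Q₂) (QuadraticMap.Isometry.inr Q₁ Q₂) IsOrtho.inl_inr _ _
    (ι_mem_evenOdd_one Q₁ x) hω.mem_evenOdd_zero
  rwa [map_apply_ι, QuadraticMap.Isometry.inl_apply] at h

variable [Invertible c]

/-- The embedding of `Cl(Q₁)` into `Cl((c Q₁) ⊕ Q₂)` given on vectors by `x ↦ c⁻¹ x ω`; its image
commutes with that of `Cl(Q₂)`. -/
def twistedInl (hω : IsEvenAnticentral ω c) :
    CliffordAlgebra Q₁ →ₐ[R] CliffordAlgebra ((c • Q₁).prod Q₂) :=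
  lift _ ⟨⅟c • LinearMap.mulRight R (map (QuadraticMap.Isometry.inr _ Q₂) ω) ∘ₗ ι _ ∘ₗ
    LinearMap.inl R M₁ M₂, fun x => by
      have hcomm := hω.commute_ι_inl_map_inr (c • Q₁) x
      simp [hcomm.symm.mul_mul_mul_comm, hω.map_inr_mul_self, Algebra.algebraMap_eq_smul_one,
        smul_smul, mul_left_comm]⟩

@[simp]
theorem twistedInl_ι (hω : IsEvenAnticentral ω c) (x : M₁) :
    hω.twistedInl Q₁ (ι Q₁ x) =
      ⅟c • (ι _ (x, 0) * map (QuadraticMap.Isometry.inr _ Q₂) ω) :=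
  lift_ι_apply _ _ _

theorem commute_twistedInl_map_inr (hω : IsEvenAnticentral ω c) (a : CliffordAlgebra Q₁)
    (b : CliffordAlgebra Q₂) :
    Commute (hω.twistedInl Q₁ a) (map (QuadraticMap.Isometry.inr (c • Q₁) Q₂) b) := by
  refine commute_of_commute_ι (fun x y => ?_) a b
  have hxy := ι_mul_ι_comm_of_isOrtho (IsOrtho.inl_inr (Q₁ := c • Q₁) (Q₂ := Q₂) x y)
  have hωy := congrArg (map (QuadraticMap.Isometry.inr (c • Q₁) Q₂)) (hω.mul_ι y)
  simp only [map_mul, map_neg, map_apply_ι, QuadraticMap.Isometry.inr_apply] at hωy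
  rw [twistedInl_ι, map_apply_ι, QuadraticMap.Isometry.inr_apply]
  refine Commute.smul_left ?_ _
  rw [commute_iff_eq, mul_assoc, hωy, mul_neg, ← mul_assoc, hxy, neg_mul, neg_neg, mul_assoc]

/-- The inverse of `toTensor`, induced by the commuting maps `twistedInl` and `map inr`. -/
def ofTensor (hω : IsEvenAnticentral ω c) :
    CliffordAlgebra Q₁ ⊗[R] CliffordAlgebra Q₂ →ₐ[R] CliffordAlgebra ((c • Q₁).prod Q₂) :=
  Algebra.TensorProduct.lift (hω.twistedInl Q₁) (map (QuadraticMap.Isometry.inr _ Q₂))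
    (hω.commute_twistedInl_map_inr Q₁)

/-- The ungraded tensor decomposition `Cl((c Q₁) ⊕ Q₂) ≃ Cl(Q₁) ⊗ Cl(Q₂)` of the Clifford algebra
of an orthogonal sum, obtained by twisting with `ω`. -/
def prodEquivTensor (hω : IsEvenAnticentral ω c) :
    CliffordAlgebra ((c • Q₁).prod Q₂) ≃ₐ[R] CliffordAlgebra Q₁ ⊗[R] CliffordAlgebra Q₂ :=
  AlgEquiv.ofAlgHom (hω.toTensor Q₁) (hω.ofTensor Q₁)
    (by ext <;> simp [ofTensor, hω.mul_self, Algebra.algebraMap_eq_smul_one, smul_smul])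
    (by ext <;> simp [ofTensor, hω.map_inr_mul_self, mul_assoc, Algebra.algebraMap_eq_smul_one,
      smul_smul])

end IsEvenAnticentral

end TwistedProduct

section Quaternion

variable {R : Type*} [CommRing R]

theorem isEvenAnticentral_ι_mul_ι (a b : R) :
    IsEvenAnticentral (ι (CliffordAlgebraQuaternion.Q a b) (1, 0) * ι _ (0, 1)) (-(a * b)) where
  mem_evenOdd_zero := ι_mul_ι_mem_evenOdd_zero _ _ _
  mul_ι v := by
    let B := CliffordAlgebraQuaternion.quaternionBasis a b
    have hv : ι (CliffordAlgebraQuaternion.Q a b) v = v.1 • B.i + v.2 • B.j := by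
      simp [B, ← map_smul, ← map_add]
    have hk : ι (CliffordAlgebraQuaternion.Q a b) (1, 0) * ι _ (0, 1) = B.k := rfl
    rw [hk, hv]
    simp [mul_add, add_mul, add_comm]
  mul_self := by
    simpa [Algebra.algebraMap_eq_smul_one] using
      (CliffordAlgebraQuaternion.quaternionBasis a b).k_mul_k

/-- Adding the binary form `⟨a, b⟩` to a scaled quadratic form tensors the Clifford algebra with the
quaternion algebra `(a, b)`. -/
def prodEquivTensorQuaternion {M : Type*} [AddCommGroup M] [Module R M]
    (Q : QuadraticForm R M) (a b : R) [Invertible (-(a * b))] :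
    CliffordAlgebra ((-(a * b) • Q).prod (CliffordAlgebraQuaternion.Q a b)) ≃ₐ[R]
      CliffordAlgebra Q ⊗[R] ℍ[R,a,b] :=
  ((isEvenAnticentral_ι_mul_ι a b).prodEquivTensor Q).trans
    (Algebra.TensorProduct.congr .refl CliffordAlgebraQuaternion.equiv)

/-- The standard quaternion basis of the `2 × 2` matrices, with `i` diagonal. -/
def splitQuaternionBasis (b : R) :
    QuaternionAlgebra.Basis (Matrix (Fin 2) (Fin 2) R) 1 0 b where
  i := !![1, 0; 0, -1]
  j := !![0, b; 1, 0]
  k := !![0, b; -1, 0]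
  i_mul_i := by simp [Matrix.one_fin_two]
  j_mul_j := by simp [Matrix.one_fin_two]
  i_mul_j := by simp
  j_mul_i := by simp

theorem splitQuaternionBasis_lift (b : R) (x : ℍ[R,1,b]) :
    (splitQuaternionBasis b).lift x =
      !![x.re + x.imI, b * (x.imJ + x.imK); x.imJ - x.imK, x.re - x.imI] := by
  ext i j
  fin_cases i <;> fin_cases j <;>
    simp [splitQuaternionBasis, QuaternionAlgebra.Basis.lift, Matrix.algebraMap_eq_diagonal,
      sub_eq_add_neg, mul_add, mul_comm]

theorem splitQuaternionBasis_lift_bijective [Invertible (2 : R)] (b : R) [Invertible b] :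
    Function.Bijective (splitQuaternionBasis b).lift := by
  have h2 : ⅟2 * 2 = (1 : R) := invOf_mul_self 2
  have hb : ⅟b * b = 1 := invOf_mul_self b
  refine Function.bijective_iff_has_inverse.2
    ⟨fun x => ⟨⅟2 * (x 0 0 + x 1 1), ⅟2 * (x 0 0 - x 1 1), ⅟2 * (⅟b * x 0 1 + x 1 0),
      ⅟2 * (⅟b * x 0 1 - x 1 0)⟩, fun x => ?_, fun x => ?_⟩
  · ext <;> simp only [splitQuaternionBasis_lift, Matrix.of_apply, Matrix.cons_val]
    · linear_combination x.re * h2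
    · linear_combination x.imI * h2
    · linear_combination ⅟2 * (x.imJ + x.imK) * hb + x.imJ * h2
    · linear_combination ⅟2 * (x.imJ + x.imK) * hb + x.imK * h2
  · ext i j
    fin_cases i <;> fin_cases j <;>
      simp only [splitQuaternionBasis_lift, Fin.zero_eta, Fin.mk_one, Matrix.of_apply,
        Matrix.cons_val]
    · linear_combination x 0 0 * h2
    · linear_combination ⅟b * b * x 0 1 * h2 + x 0 1 * hb
    · linear_combination x 1 0 * h2
    · linear_combination x 1 1 * h2

/-- The splitting of the quaternion algebra `(1, b)` by the matrices of `splitQuaternionBasis`. -/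
def splitQuaternionEquiv [Invertible (2 : R)] (b : R) [Invertible b] :
    ℍ[R,1,b] ≃ₐ[R] Matrix (Fin 2) (Fin 2) R :=
  .ofBijective (splitQuaternionBasis b).liftHom (splitQuaternionBasis_lift_bijective b)

end Quaternion

section DiagonalForm

open Finset

variable {R m n : Type*} [CommRing R] [Fintype m] [Fintype n] {w : m → R} {w' : n → R}

theorem equivalent_weightedSumSquares_of_map_univ_eq (h : univ.val.map w = univ.val.map w') :
    (weightedSumSquares R w).Equivalent (weightedSumSquares R w') := by
  classical
  have hcard (r : R) : Fintype.card {i // w i = r} = Fintype.card {j // w' j = r} := by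
    simpa [Multiset.count_map, Fintype.card_subtype, Finset.card, eq_comm] using
      congrArg (Multiset.count r) h
  let e := Equiv.ofFiberEquiv fun r => Fintype.equivOfCardEq (hcard r)
  have he (i : m) : w' (e i) = w i := Equiv.ofFiberEquiv_map _ i
  exact ⟨{ LinearEquiv.funCongrLeft R R e.symm with
    map_app' := fun v => by
      simp [weightedSumSquares_apply, ← e.sum_comp, he, LinearMap.funLeft_apply] }⟩

theorem equivalent_weightedSumSquares_prod_quaternion (w : m → R) (a b c : R) :
    (weightedSumSquares R (Sum.elim (fun i => c * w i) ![a, b])).Equivalent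
      ((c • weightedSumSquares R w).prod (CliffordAlgebraQuaternion.Q a b)) :=
  ⟨{ (LinearEquiv.sumArrowLequivProdArrow m (Fin 2) R R).trans
      (.prodCongr (.refl R _) (LinearEquiv.finTwoArrow R R)) with
    map_app' := fun v => by simp [weightedSumSquares_apply, mul_sum, mul_assoc] }⟩

theorem map_univ_sumElim {γ : Type*} (f : m → γ) (g : n → γ) :
    univ.val.map (Sum.elim f g) = univ.val.map f + univ.val.map g := by
  simp [← univ_disjSum_univ, disjSum, Multiset.disjSum, Multiset.map_map]

theorem nonempty_weightedSumSquares_tensor_quaternion {a b : R} (hab : IsUnit (a * b))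
    (h : univ.val.map w' = (univ.val.map w |>.map (-(a * b) * ·)) + {a, b}) :
    Nonempty (CliffordAlgebra (weightedSumSquares R w') ≃ₐ[R]
      CliffordAlgebra (weightedSumSquares R w) ⊗[R] ℍ[R,a,b]) := by
  let := hab.neg.invertible
  have hmap : univ.val.map w' =
      univ.val.map (Sum.elim (fun i => -(a * b) * w i) ![a, b]) := by
    have hab_univ : univ.val.map ![a, b] = {a, b} := rfl
    rw [h, map_univ_sumElim, Multiset.map_map, hab_univ]
    rfl
  obtain ⟨f⟩ := equivalent_weightedSumSquares_of_map_univ_eq hmap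
  obtain ⟨g⟩ := equivalent_weightedSumSquares_prod_quaternion w a b (-(a * b))
  exact ⟨(equivOfIsometry (f.trans g)).trans (prodEquivTensorQuaternion _ a b)⟩

end DiagonalForm

theorem finrank_cliffordAlgebra {R M : Type*} [CommRing R] [Nontrivial R] [Invertible (2 : R)]
    [AddCommGroup M] [Module R M] [Module.Free R M] [Module.Finite R M] (Q : QuadraticForm R M) :
    Module.finrank R (CliffordAlgebra Q) = 2 ^ Module.finrank R M := by
  let b := (Module.finBasis R M).ExteriorAlgebra
  rw [(equivExterior Q).finrank_eq, Module.finrank_eq_card_basis b, Fintype.card_finset,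
    Fintype.card_fin]

section MatrixAlgebra

/-- `A` is a full matrix algebra over `K` of some size `2^k`. The size is existential, since the
dimension of `A` determines it: see `IsTwoPowMatrixAlgebra.nonempty_algEquiv`. -/
def IsTwoPowMatrixAlgebra (R K A : Type*) [CommRing R] [Ring K] [Algebra R K] [Ring A]
    [Algebra R A] : Prop :=
  ∃ k : ℕ, Nonempty (A ≃ₐ[R] Matrix (Fin (2 ^ k)) (Fin (2 ^ k)) K)

namespace IsTwoPowMatrixAlgebra

variable {R K K' A A' B : Type*} [CommRing R] [Ring K] [Algebra R K] [Ring K'] [Algebra R K']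
  [Ring A] [Algebra R A] [Ring A'] [Algebra R A'] [Ring B] [Algebra R B]

theorem of_algEquiv (e : A ≃ₐ[R] K) : IsTwoPowMatrixAlgebra R K A :=
  ⟨0, ⟨e.trans <| (Matrix.uniqueAlgEquiv (m := Unit)).symm.trans <|
    Matrix.reindexAlgEquiv R K (Equiv.ofUnique Unit (Fin 1))⟩⟩

theorem congr (h : IsTwoPowMatrixAlgebra R K A) (e : A' ≃ₐ[R] A) :
    IsTwoPowMatrixAlgebra R K A' :=
  let ⟨k, hk⟩ := h
  ⟨k, hk.map e.trans⟩

theorem tensorProduct (hA : IsTwoPowMatrixAlgebra R K A)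
    (hB : IsTwoPowMatrixAlgebra R K' (K ⊗[R] B)) : IsTwoPowMatrixAlgebra R K' (A ⊗[R] B) := by
  obtain ⟨k, ⟨f⟩⟩ := hA
  obtain ⟨l, ⟨g⟩⟩ := hB
  refine ⟨k + l, ⟨?_⟩⟩
  exact (Algebra.TensorProduct.congr f (Matrix.uniqueAlgEquiv (m := Unit)).symm).trans <|
    (Matrix.kroneckerTMulAlgEquiv (Fin (2 ^ k)) Unit R R K B).trans <| g.mapMatrix.trans <|
    (Matrix.compAlgEquiv (Fin (2 ^ k) × Unit) (Fin (2 ^ l)) K' R).trans <|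
    Matrix.reindexAlgEquiv R K' <| (Equiv.prodCongr (Equiv.prodPUnit _) (Equiv.refl _)).trans <|
      finProdFinEquiv.trans (finCongr (pow_add 2 k l).symm)

theorem tensor_matrix_two (h : IsTwoPowMatrixAlgebra R K A) :
    IsTwoPowMatrixAlgebra R K (A ⊗[R] Matrix (Fin 2) (Fin 2) R) :=
  h.tensorProduct ⟨1, ⟨(matrixEquivTensor (Fin 2) R K).symm⟩⟩

theorem isSimpleRing [IsSimpleRing K] (h : IsTwoPowMatrixAlgebra R K A) : IsSimpleRing A :=
  let ⟨_, ⟨e⟩⟩ := h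
  .of_ringEquiv e.symm.toRingEquiv inferInstance

theorem nonempty_algEquiv [Module.Free R K] [Module.Finite R K] [Nontrivial K]
    (h : IsTwoPowMatrixAlgebra R K A) {k : ℕ}
    (hk : Module.finrank R A = 2 ^ k * 2 ^ k * Module.finrank R K) :
    Nonempty (A ≃ₐ[R] Matrix (Fin (2 ^ k)) (Fin (2 ^ k)) K) := by
  obtain ⟨l, ⟨e⟩⟩ := h
  have := Module.nontrivial R K
  have hlk : 2 ^ l * 2 ^ l = 2 ^ k * 2 ^ k := by
    rw [e.toLinearEquiv.finrank_eq, Module.finrank_matrix, Fintype.card_fin] at hk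
    exact Nat.eq_of_mul_eq_mul_right ((Module.finrank_pos_iff_of_free R K).2 inferInstance) hk
  obtain rfl : l = k := Nat.pow_right_injective le_rfl (Nat.mul_self_inj.1 hlk)
  exact ⟨e⟩

end IsTwoPowMatrixAlgebra

end MatrixAlgebra

section RealCliffordAlgebras

open Multiset

theorem finrank_Cl (p q : ℕ) : Module.finrank ℝ (Cl p q) = 2 ^ (p + q) := by
  rw [finrank_cliffordAlgebra, Module.finrank_fin_fun]

theorem map_univ_signs (p q : ℕ) :
    Finset.univ.val.map (fun i : Fin (p + q) => if (i : ℕ) < p then (1 : ℝ) else -1) =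
      replicate p 1 + replicate q (-1) := by
  have h : (fun i : Fin (p + q) => if (i : ℕ) < p then (1 : ℝ) else -1) ∘ finSumFinEquiv =
      Sum.elim (fun _ => 1) fun _ => -1 := by
    ext (i | i) <;> simp
  rw [← map_univ_val_equiv finSumFinEquiv, Multiset.map_map, h, map_univ_sumElim]
  simp

theorem nonempty_Cl_tensor_quaternion {p q p' q' : ℕ} {a b : ℝ} (hab : IsUnit (a * b))
    (h : replicate p' (1 : ℝ) + replicate q' (-1) =
      Multiset.map (-(a * b) * ·) (replicate p 1 + replicate q (-1)) + {a, b}) :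
    Nonempty (Cl p' q' ≃ₐ[ℝ] Cl p q ⊗[ℝ] ℍ[ℝ,a,b]) :=
  nonempty_weightedSumSquares_tensor_quaternion hab <| by rwa [map_univ_signs, map_univ_signs]

theorem nonempty_Cl_succ_succ (p q : ℕ) :
    Nonempty (Cl (p + 1) (q + 1) ≃ₐ[ℝ] Cl p q ⊗[ℝ] Matrix (Fin 2) (Fin 2) ℝ) := by
  let := invertibleOne (α := ℝ)
  let := invertibleNeg (1 : ℝ)
  obtain ⟨e⟩ := nonempty_Cl_tensor_quaternion (p := p) (q := q) (p' := p + 1) (q' := q + 1)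
    (a := 1) (b := -1) (by simp) (by
      simp [← singleton_add, add_comm, add_left_comm, add_assoc])
  exact ⟨e.trans (Algebra.TensorProduct.congr .refl (splitQuaternionEquiv (-1)))⟩

theorem nonempty_Cl_add_two_left (p q : ℕ) :
    Nonempty (Cl (q + 2) p ≃ₐ[ℝ] Cl p q ⊗[ℝ] Matrix (Fin 2) (Fin 2) ℝ) := by
  let := invertibleOne (α := ℝ)
  obtain ⟨e⟩ := nonempty_Cl_tensor_quaternion (p := p) (q := q) (p' := q + 2) (q' := p)
    (a := 1) (b := 1) (by simp) (by
      simp [← singleton_add, add_comm, add_left_comm, add_assoc])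
  exact ⟨e.trans (Algebra.TensorProduct.congr .refl (splitQuaternionEquiv 1))⟩

theorem nonempty_Cl_add_two_right (p q : ℕ) :
    Nonempty (Cl q (p + 2) ≃ₐ[ℝ] Cl p q ⊗[ℝ] ℍ[ℝ]) :=
  nonempty_Cl_tensor_quaternion (a := -1) (b := -1) (by simp) (by
    simp [← singleton_add, add_comm, add_left_comm, add_assoc])

theorem nonempty_Cl_zero_zero : Nonempty (Cl 0 0 ≃ₐ[ℝ] ℝ) :=
  ⟨(equivOfIsometry (Q₂ := (0 : QuadraticForm ℝ Unit))
    { LinearEquiv.ofSubsingleton (Fin 0 → ℝ) Unit with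
      map_app' := fun v => by simp [Qpq, weightedSumSquares_apply] }).trans
    CliffordAlgebraRing.equiv⟩

theorem nonempty_Cl_zero_one : Nonempty (Cl 0 1 ≃ₐ[ℝ] ℂ) :=
  ⟨(equivOfIsometry (Q₂ := CliffordAlgebraComplex.Q)
    { LinearEquiv.funUnique (Fin 1) ℝ ℝ with
      map_app' := fun v => by simp [Qpq, weightedSumSquares_apply] }).trans
    CliffordAlgebraComplex.equiv⟩

theorem nonempty_Cl_zero_two : Nonempty (Cl 0 2 ≃ₐ[ℝ] ℍ[ℝ]) := by
  obtain ⟨e⟩ := nonempty_Cl_add_two_right 0 0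
  obtain ⟨r⟩ := nonempty_Cl_zero_zero
  exact ⟨e.trans <| (Algebra.TensorProduct.congr r .refl).trans (Algebra.TensorProduct.lid ℝ _)⟩

theorem isTwoPowMatrixAlgebra_complex_tensor_quaternion :
    IsTwoPowMatrixAlgebra ℝ ℂ (ℂ ⊗[ℝ] ℍ[ℝ]) := by
  obtain ⟨c⟩ := nonempty_Cl_zero_one
  obtain ⟨f⟩ := nonempty_Cl_add_two_right 0 1
  obtain ⟨g⟩ := nonempty_Cl_succ_succ 0 1
  exact (IsTwoPowMatrixAlgebra.of_algEquiv c).tensor_matrix_two.congr <|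
    (Algebra.TensorProduct.congr c.symm .refl).trans <| f.symm.trans g

theorem isTwoPowMatrixAlgebra_quaternion_tensor_quaternion :
    IsTwoPowMatrixAlgebra ℝ ℝ (ℍ[ℝ] ⊗[ℝ] ℍ[ℝ]) := by
  obtain ⟨r⟩ := nonempty_Cl_zero_zero
  obtain ⟨h⟩ := nonempty_Cl_zero_two
  obtain ⟨f⟩ := nonempty_Cl_add_two_right 0 2
  obtain ⟨g⟩ := nonempty_Cl_succ_succ 0 0
  obtain ⟨g'⟩ := nonempty_Cl_succ_succ 1 1
  have h₁ := (IsTwoPowMatrixAlgebra.of_algEquiv r).tensor_matrix_two.congr g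
  exact h₁.tensor_matrix_two.congr <|
    (Algebra.TensorProduct.congr h.symm .refl).trans <| f.symm.trans g'

/-- `A` is a full matrix algebra over the coefficients `ℝ`, `ℂ` or `ℍ` that Bott periodicity assigns
to the signature `d = p - q` of a form; no condition is imposed if `d ≡ 1 (mod 4)`. -/
structure HasBottCoefficients (A : Type*) [Ring A] [Algebra ℝ A] (d : ℤ) : Prop where
  real : d % 8 = 0 ∨ d % 8 = 2 → IsTwoPowMatrixAlgebra ℝ ℝ A
  complex : d % 8 = 3 ∨ d % 8 = 7 → IsTwoPowMatrixAlgebra ℝ ℂ A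
  quaternion : d % 8 = 4 ∨ d % 8 = 6 → IsTwoPowMatrixAlgebra ℝ ℍ[ℝ] A

namespace HasBottCoefficients

variable {A A' : Type*} [Ring A] [Algebra ℝ A] [Ring A'] [Algebra ℝ A'] {d : ℤ}

theorem congr (h : HasBottCoefficients A d) (e : A' ≃ₐ[ℝ] A) : HasBottCoefficients A' d where
  real hd := (h.real hd).congr e
  complex hd := (h.complex hd).congr e
  quaternion hd := (h.quaternion hd).congr e

theorem two_sub (h : HasBottCoefficients A d) : HasBottCoefficients A (2 - d) where
  real hd := h.real (by omega)
  complex hd := h.complex (by omega)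
  quaternion hd := h.quaternion (by omega)

theorem tensor_matrix_two (h : HasBottCoefficients A d) :
    HasBottCoefficients (A ⊗[ℝ] Matrix (Fin 2) (Fin 2) ℝ) d where
  real hd := (h.real hd).tensor_matrix_two
  complex hd := (h.complex hd).tensor_matrix_two
  quaternion hd := (h.quaternion hd).tensor_matrix_two

theorem tensor_quaternion (h : HasBottCoefficients A d) :
    HasBottCoefficients (A ⊗[ℝ] ℍ[ℝ]) (-2 - d) where
  real hd := (h.quaternion (by omega)).tensorProduct
    isTwoPowMatrixAlgebra_quaternion_tensor_quaternion
  complex hd := (h.complex (by omega)).tensorProduct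
    isTwoPowMatrixAlgebra_complex_tensor_quaternion
  quaternion hd := (h.real (by omega)).tensorProduct
    (.of_algEquiv (Algebra.TensorProduct.lid ℝ ℍ[ℝ]))

theorem isSimpleRing (h : HasBottCoefficients A d) (hd : ¬ d % 4 = 1) : IsSimpleRing A := by
  have hd8 : (d % 8 = 0 ∨ d % 8 = 2) ∨ (d % 8 = 3 ∨ d % 8 = 7) ∨ d % 8 = 4 ∨ d % 8 = 6 := by
    omega
  rcases hd8 with hd | hd | hd
  · exact (h.real hd).isSimpleRing
  · exact (h.complex hd).isSimpleRing
  · exact (h.quaternion hd).isSimpleRing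

end HasBottCoefficients

theorem hasBottCoefficients_Cl : ∀ p q : ℕ, HasBottCoefficients (Cl p q) (p - q)
  | 0, 0 => by
    obtain ⟨r⟩ := nonempty_Cl_zero_zero
    exact ⟨fun _ => .of_algEquiv r, by simp, by simp⟩
  | 0, 1 => by
    obtain ⟨c⟩ := nonempty_Cl_zero_one
    exact ⟨by simp, fun _ => .of_algEquiv c, by simp⟩
  | 1, 0 => ⟨by simp, by simp, by simp⟩
  | p + 1, q + 1 => by
    obtain ⟨e⟩ := nonempty_Cl_succ_succ p q
    simpa using (hasBottCoefficients_Cl p q).tensor_matrix_two.congr e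
  | p + 2, 0 => by
    obtain ⟨e⟩ := nonempty_Cl_add_two_left 0 p
    convert (hasBottCoefficients_Cl 0 p).two_sub.tensor_matrix_two.congr e using 1
    push_cast
    ring
  | 0, q + 2 => by
    obtain ⟨e⟩ := nonempty_Cl_add_two_right q 0
    convert (hasBottCoefficients_Cl q 0).tensor_quaternion.congr e using 1
    push_cast
    ring
  termination_by p q => p + q

theorem two_mul_radonHurwitz (i : ℤ) :
    (i % 8 = 0 ∨ i % 8 = 6 → 2 * radonHurwitz i = i) ∧
    (i % 8 = 1 ∨ i % 8 = 5 → 2 * radonHurwitz i = i + 1) ∧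
    (i % 8 = 2 ∨ i % 8 = 4 → 2 * radonHurwitz i = i + 2) := by
  refine ⟨?_, ?_, ?_⟩ <;> rintro (h | h) <;> simp [radonHurwitz, h, rhBase] <;> omega

end RealCliffordAlgebras

/-- If `p - q ≢ 1 (mod 4)` then `Cl_{p,q}` is a simple algebra of dimension `2^{p+q}`
isomorphic to a full matrix algebra `Mat(2^k, 𝕂)`, `k = q - r_{q-p}`, where `𝕂` is `ℝ`,
`ℂ`, or `ℍ` according as `p - q ≡ 0,2`, `3,7`, or `4,6 (mod 8)`. -/
theorem clifford_simple_structure (p q : ℕ) (h : ¬ ((p : ℤ) - q) % 4 = 1) :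
    IsSimpleRing (Cl p q) ∧
    Module.finrank ℝ (Cl p q) = 2 ^ (p + q) ∧
    (∀ k : ℕ, (k : ℤ) = (q : ℤ) - radonHurwitz ((q : ℤ) - p) →
      ((((p : ℤ) - q) % 8 = 0 ∨ ((p : ℤ) - q) % 8 = 2 →
        Nonempty (Cl p q ≃ₐ[ℝ] Matrix (Fin (2 ^ k)) (Fin (2 ^ k)) ℝ)) ∧
      (((p : ℤ) - q) % 8 = 3 ∨ ((p : ℤ) - q) % 8 = 7 →
        Nonempty (Cl p q ≃ₐ[ℝ] Matrix (Fin (2 ^ k)) (Fin (2 ^ k)) ℂ)) ∧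
      (((p : ℤ) - q) % 8 = 4 ∨ ((p : ℤ) - q) % 8 = 6 →
        Nonempty (Cl p q ≃ₐ[ℝ] Matrix (Fin (2 ^ k)) (Fin (2 ^ k)) (Quaternion ℝ))))) := by
  have hCl := hasBottCoefficients_Cl p q
  have hr := two_mul_radonHurwitz (q - p)
  refine ⟨hCl.isSimpleRing h, finrank_Cl p q,
    fun k hk => ⟨fun hd => ?_, fun hd => ?_, fun hd => ?_⟩⟩
  · have hpq : p + q = k + k := by omega
    exact (hCl.real hd).nonempty_algEquiv (by simp [finrank_Cl, hpq, pow_add])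
  · have hpq : p + q = k + k + 1 := by omega
    exact (hCl.complex hd).nonempty_algEquiv (by simp [finrank_Cl, hpq, pow_add])
  · have hpq : p + q = k + k + 2 := by omega
    exact (hCl.quaternion hd).nonempty_algEquiv
      (by simp [finrank_Cl, hpq, pow_add, Quaternion.finrank_eq_four])

end
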